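/- Let G be a finite connected graph with active vertex set A_G, and let B be a biconnected component (block) of G containing no active vertices and containing exactly one cut vertex c of G. Let H be the graph obtained from G by deleting all vertices of B other than c together with all edges of B. Then, with active vertex set A_G and f the identity map on A_G, G and H are active-cut equivalent for 3-vertex connectivity via f. -/

import Mathlib

/-!
The two minimum cut sizes agree for every partition of the active vertices, so the threshold `3`
plays no role. The reason is that `B` hangs on the rest of `G` only at `c`.

* `IsBlock.support_subset`: a path of `G` with both endpoints in a block `B` stays in `B`.
  Adding the path to `B` creates no cut vertex, because after the removal of a vertex `v` every
  other vertex of the path still reaches one of its endpoints; so maximality of `B` applies.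
* `not_adj_of_not_cutVertex`: hence a vertex `x` of `B` that is not a cut vertex has no neighbour
  outside `B`: such a neighbour would reach `c` in `G - x`, closing a path that leaves `B`.
* A cut of `G` that separates active vertices restricts to `H` without growing, since the deleted
  vertices are inactive. Conversely (`exists_extend`) a cut of `H` extends to `G` with the
  same cut set: put `B \ {c}` on the side of `c`, or on either side if `c` is a cut-set vertex.
-/

/-- A vertex cut `(C, S, T)` of a graph `G`: pairwise disjoint vertex sets with
`C ∪ S ∪ T = V`, `S` and `T` nonempty, and no edge of `G` joining `S` and `T`. -/
def IsVertexCut {V : Type*} (G : SimpleGraph V) (C S T : Set V) : Prop :=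
  Disjoint C S ∧ Disjoint C T ∧ Disjoint S T ∧ C ∪ S ∪ T = Set.univ ∧
  S.Nonempty ∧ T.Nonempty ∧ ∀ a ∈ S, ∀ b ∈ T, ¬ G.Adj a b

/-- The vertex cut `(C, S, T)` separates the vertex set `X`. -/
def SeparatesV {V : Type*} (S T X : Set V) : Prop :=
  (X ∩ S).Nonempty ∧ (X ∩ T).Nonempty

/-- `(C, S, T)` is a minimal separating vertex cut of `X` in `G`: it is a vertex
cut separating `X`, with `|C|` minimum among all vertex cuts inducing the same
partition of `X`. -/
def IsMinSepVertexCut {V : Type*} (G : SimpleGraph V) (X C S T : Set V) : Prop :=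
  IsVertexCut G C S T ∧ SeparatesV S T X ∧
    ∀ C' S' T' : Set V, IsVertexCut G C' S' T' →
      X ∩ S' = X ∩ S → X ∩ T' = X ∩ T → C.ncard ≤ C'.ncard

/-- `G` (with active vertices `AG`) and `H` (with active vertices `AH`) are
active-cut equivalent for `l`-vertex connectivity via the surjection `f`. -/
def ActiveCutEquivVertex {V W : Type*} (G : SimpleGraph V) (H : SimpleGraph W)
    (AG : Set V) (AH : Set W) (f : V → W) (l : ℕ) : Prop :=
  Set.MapsTo f AG AH ∧ Set.SurjOn f AG AH ∧
  (∀ C S T : Set V, IsMinSepVertexCut G AG C S T → C.ncard < l →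
    ∃ C' S' T' : Set W, IsMinSepVertexCut H AH C' S' T' ∧
      C'.ncard = C.ncard ∧
      f '' (AG ∩ S) = AH ∩ S' ∧ f '' (AG ∩ T) = AH ∩ T') ∧
  (∀ C S T : Set V, IsMinSepVertexCut G AG C S T → l ≤ C.ncard →
    ∀ C' S' T' : Set W, IsMinSepVertexCut H AH C' S' T' →
      f '' (AG ∩ S) = AH ∩ S' → f '' (AG ∩ T) = AH ∩ T' → l ≤ C'.ncard)

/-- `v` is a cut vertex of the (connected) graph `G`: its removal disconnects `G`. -/
def IsCutVertex {V : Type*} (G : SimpleGraph V) (v : V) : Prop :=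
  ¬ (G.induce ({v}ᶜ : Set V)).Preconnected

/-- A graph has no cut vertex of itself. -/
def HasNoCutVertex {V : Type*} (G : SimpleGraph V) : Prop :=
  ∀ v : V, (G.induce ({v}ᶜ : Set V)).Preconnected

/-- `B` is (the vertex set of) a biconnected component (block) of `G`: a maximal
connected induced subgraph of `G` containing no cut vertex of itself. -/
def IsBlock {V : Type*} (G : SimpleGraph V) (B : Set V) : Prop :=
  B.Nonempty ∧ (G.induce B).Preconnected ∧ HasNoCutVertex (G.induce B) ∧
    ∀ B' : Set V, B ⊆ B' → (G.induce B').Preconnected →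
      HasNoCutVertex (G.induce B') → B' = B

/-! ### Paths in blocks -/

/-- `a` and `b` are joined by a walk of `G` that stays in the vertex set `S`. -/
def ReachIn {V : Type*} (G : SimpleGraph V) (S : Set V) (a b : V) : Prop :=
  ∃ p : G.Walk a b, ∀ u ∈ p.support, u ∈ S

section Reach

variable {V : Type*} {G : SimpleGraph V}

lemma ReachIn.symm {S : Set V} {a b : V} (h : ReachIn G S a b) : ReachIn G S b a := by
  obtain ⟨p, hp⟩ := h
  exact ⟨p.reverse, fun u hu => hp u (by simpa using hu)⟩

lemma ReachIn.trans {S : Set V} {a b d : V} (h : ReachIn G S a b) (h' : ReachIn G S b d) :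
    ReachIn G S a d := by
  obtain ⟨p, hp⟩ := h
  obtain ⟨q, hq⟩ := h'
  refine ⟨p.append q, fun u hu => ?_⟩
  rcases (SimpleGraph.Walk.mem_support_append_iff _ _).1 hu with hu | hu
  exacts [hp u hu, hq u hu]

lemma ReachIn.mono {S T : Set V} (hST : S ⊆ T) {a b : V} (h : ReachIn G S a b) :
    ReachIn G T a b := by
  obtain ⟨p, hp⟩ := h
  exact ⟨p, fun u hu => hST (hp u hu)⟩

lemma preconnected_induce_iff {S : Set V} :
    (G.induce S).Preconnected ↔ ∀ a ∈ S, ∀ b ∈ S, ReachIn G S a b := by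
  constructor
  · intro h a ha b hb
    obtain ⟨p⟩ := h ⟨a, ha⟩ ⟨b, hb⟩
    refine ⟨p.map (SimpleGraph.Embedding.induce S).toHom, fun u hu => ?_⟩
    have hu' : u ∈ p.support.map (SimpleGraph.Embedding.induce (G := G) S).toHom := by
      rw [← SimpleGraph.Walk.support_map]; exact hu
    obtain ⟨w, -, rfl⟩ := List.mem_map.1 hu'
    exact w.2
  · rintro h ⟨a, ha⟩ ⟨b, hb⟩
    obtain ⟨p, hp⟩ := h a ha b hb
    exact ⟨p.induce S hp⟩

/-- Transports the absence of cut vertices in `G.induce S`, a statement about an induced subgraph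
of an induced subgraph, to walks of `G`. -/
lemma hasNoCutVertex_induce_iff {S : Set V} :
    HasNoCutVertex (G.induce S) ↔
      ∀ v ∈ S, ∀ a ∈ S, ∀ b ∈ S, a ≠ v → b ≠ v → ReachIn G (S \ {v}) a b := by
  constructor
  · intro h v hv a ha b hb hav hbv
    obtain ⟨p, hp⟩ := preconnected_induce_iff.1 (h ⟨v, hv⟩) ⟨a, ha⟩
      (by simpa [Subtype.ext_iff] using hav) ⟨b, hb⟩ (by simpa [Subtype.ext_iff] using hbv)
    refine ⟨p.map (SimpleGraph.Embedding.induce S).toHom, fun u hu => ?_⟩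
    have hu' : u ∈ p.support.map (SimpleGraph.Embedding.induce (G := G) S).toHom := by
      rw [← SimpleGraph.Walk.support_map]; exact hu
    obtain ⟨w, hw, rfl⟩ := List.mem_map.1 hu'
    refine ⟨w.2, fun hwv => hp w hw ?_⟩
    exact Subtype.ext hwv
  · rintro h ⟨v, hv⟩
    rw [preconnected_induce_iff]
    rintro ⟨a, ha⟩ hav ⟨b, hb⟩ hbv
    obtain ⟨p, hp⟩ := h v hv a ha b hb (by simpa [Subtype.ext_iff] using hav)
      (by simpa [Subtype.ext_iff] using hbv)
    refine ⟨p.induce S (fun u hu => (hp u hu).1), fun u hu => ?_⟩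
    rw [SimpleGraph.Walk.support_induce] at hu
    have hu' : u.1 ∈ p.support := by
      simpa using hu
    simpa [Subtype.ext_iff] using (hp u.1 hu').2

/-- After the removal of a vertex `v`, any other vertex of a path still reaches an endpoint. -/
lemma reachIn_endpoint [DecidableEq V] {x b : V} {p : G.Walk x b} (hp : p.IsPath) {w v : V}
    (hw : w ∈ p.support) (hwv : w ≠ v) :
    ReachIn G ({u | u ∈ p.support} \ {v}) w x ∨ ReachIn G ({u | u ∈ p.support} \ {v}) w b := by
  -- As `p` repeats no vertex, `v` cannot lie both before and after `w`.
  by_cases hv : v ∈ (p.takeUntil w hw).support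
  · right
    refine ⟨p.dropUntil w hw, fun u hu => ⟨p.support_dropUntil_subset_support hw hu, ?_⟩⟩
    rintro rfl
    have hnd := hp.support_nodup
    rw [← p.take_spec hw, SimpleGraph.Walk.support_append] at hnd
    refine (List.disjoint_of_nodup_append hnd) hv ?_
    rw [SimpleGraph.Walk.mem_support_iff] at hu
    exact hu.resolve_left hwv.symm
  · left
    refine ReachIn.symm ⟨p.takeUntil w hw, fun u hu =>
      ⟨p.support_takeUntil_subset_support hw hu, ?_⟩⟩
    rintro rfl
    exact hv hu

/-- A path with both endpoints in a block stays in the block: by maximality, since adding the path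
creates no cut vertex. -/
lemma IsBlock.support_subset {B : Set V} (hB : IsBlock G B) {x b : V} (hx : x ∈ B) (hb : b ∈ B)
    {p : G.Walk x b} (hp : p.IsPath) : ∀ u ∈ p.support, u ∈ B := by
  classical
  obtain ⟨-, hBc, hBn, hmax⟩ := hB
  rw [preconnected_induce_iff] at hBc
  rw [hasNoCutVertex_induce_iff] at hBn
  set B' : Set V := B ∪ {u | u ∈ p.support} with hB'
  have hBrem : ∀ v, ∀ a ∈ B, ∀ d ∈ B, a ≠ v → d ≠ v → ReachIn G (B' \ {v}) a d := by
    intro v a ha d hd hav hdv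
    by_cases hv : v ∈ B
    · exact (hBn v hv a ha d hd hav hdv).mono (Set.sdiff_subset_sdiff_left Set.subset_union_left)
    · have hsub : B ⊆ B' \ {v} := fun u hu => ⟨Or.inl hu, fun huv => hv (huv ▸ hu)⟩
      exact (hBc a ha d hd).mono hsub
  have hto : ∀ v, ∀ a ∈ B', a ≠ v → ∃ d ∈ B, d ≠ v ∧ ReachIn G (B' \ {v}) a d := by
    intro v a ha hav
    rcases ha with ha | ha
    · exact ⟨a, ha, hav, hBrem v a ha a ha hav hav⟩
    · have hsub : {u | u ∈ p.support} \ {v} ⊆ B' \ {v} :=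
        Set.sdiff_subset_sdiff_left Set.subset_union_right
      rcases reachIn_endpoint hp ha hav with h | h
      · refine ⟨x, hx, ?_, h.mono hsub⟩
        obtain ⟨q, hq⟩ := h
        exact (hq _ q.end_mem_support).2
      · refine ⟨b, hb, ?_, h.mono hsub⟩
        obtain ⟨q, hq⟩ := h
        exact (hq _ q.end_mem_support).2
  have hrem : ∀ v, ∀ a ∈ B', ∀ d ∈ B', a ≠ v → d ≠ v → ReachIn G (B' \ {v}) a d := by
    intro v a ha d hd hav hdv
    obtain ⟨a', ha', hav', hra⟩ := hto v a ha hav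
    obtain ⟨d', hd', hdv', hrd⟩ := hto v d hd hdv
    exact (hra.trans (hBrem v a' ha' d' hd' hav' hdv')).trans hrd.symm
  have hconn : ∀ a ∈ B', ReachIn G B' a b := by
    rintro a (ha | ha)
    · exact (hBc a ha b hb).mono Set.subset_union_left
    · exact ⟨p.dropUntil a ha, fun u hu => Or.inr (p.support_dropUntil_subset_support ha hu)⟩
  have heq : B' = B := by
    refine hmax B' Set.subset_union_left ?_ ?_
    · rw [preconnected_induce_iff]
      exact fun a ha d hd => (hconn a ha).trans (hconn d hd).symm
    · rw [hasNoCutVertex_induce_iff]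
      exact fun v _ => hrem v
  intro u hu
  rw [← heq]
  exact Or.inr hu

lemma not_adj_of_not_cutVertex {B : Set V} (hB : IsBlock G B) {c x y : V} (hc : c ∈ B)
    (hx : x ∈ B) (hxc : x ≠ c) (hcut : ¬ IsCutVertex G x) (hy : y ∉ B) : ¬ G.Adj x y := by
  classical
  intro hxy
  have hpre := preconnected_induce_iff.1 (not_not.1 hcut)
  obtain ⟨p, hp⟩ := hpre y hxy.ne' c hxc.symm
  have hpath : (SimpleGraph.Walk.cons hxy p.bypass).IsPath := by
    rw [SimpleGraph.Walk.cons_isPath_iff]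
    exact ⟨p.bypass_isPath, fun h => hp x (p.support_bypass_subset_support h) rfl⟩
  exact hy (hB.support_subset hx hc hpath y (by simp))

end Reach

/-! ### Transfer of cuts between `G` and `H` -/

section Cuts

variable {V : Type*} {G : SimpleGraph V}

lemma IsVertexCut.swap {C S T : Set V} (h : IsVertexCut G C S T) : IsVertexCut G C T S := by
  obtain ⟨h1, h2, h3, h4, h5, h6, h7⟩ := h
  refine ⟨h2, h1, h3.symm, ?_, h6, h5, fun a ha b hb hab => h7 b hb a ha hab.symm⟩
  rw [← h4, Set.union_assoc, Set.union_assoc, Set.union_comm T S]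

/-- Extension of a cut when `c` is not on the side `T'`: the vertices of `B \ {c}` join `S'`. -/
lemma extend_aux {B : Set V} {c : V} {H : SimpleGraph ↥((B \ {c})ᶜ : Set V)}
    (hH : ∀ x y, H.Adj x y ↔ (G.Adj x.val y.val ∧ ¬ (x.val ∈ B ∧ y.val ∈ B)))
    (hno : ∀ x ∈ B \ {c}, ∀ y ∉ B, ¬ G.Adj x y)
    {C' S' T' : Set ↥((B \ {c})ᶜ : Set V)} (h : IsVertexCut H C' S' T')
    (hcT : ∀ t ∈ T', t.val ≠ c) :
    IsVertexCut G (Subtype.val '' C') (Subtype.val '' S' ∪ B \ {c}) (Subtype.val '' T') := by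
  obtain ⟨h1, h2, h3, h4, h5, h6, h7⟩ := h
  have hinj := Subtype.val_injective (p := fun v => v ∈ ((B \ {c})ᶜ : Set V))
  have hdis : ∀ X : Set ↥((B \ {c})ᶜ : Set V), Disjoint (Subtype.val '' X) (B \ {c}) := by
    intro X
    rw [Set.disjoint_left]
    rintro _ ⟨x, -, rfl⟩
    exact x.2
  have hTB : ∀ t ∈ T', t.val ∉ B := fun t ht htB => t.2 ⟨htB, hcT t ht⟩
  refine ⟨?_, ?_, ?_, ?_, ?_, h6.image _, ?_⟩
  · exact Set.disjoint_union_right.2 ⟨(Set.disjoint_image_iff hinj).2 h1, hdis C'⟩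
  · exact (Set.disjoint_image_iff hinj).2 h2
  · exact Set.disjoint_union_left.2 ⟨(Set.disjoint_image_iff hinj).2 h3, (hdis T').symm⟩
  · rw [Set.eq_univ_iff_forall]
    intro v
    by_cases hv : v ∈ B \ {c}
    · exact Or.inl (Or.inr (Or.inr hv))
    · have := Set.eq_univ_iff_forall.1 h4 ⟨v, hv⟩
      rcases this with (h | h) | h
      · exact Or.inl (Or.inl ⟨_, h, rfl⟩)
      · exact Or.inl (Or.inr (Or.inl ⟨_, h, rfl⟩))
      · exact Or.inr ⟨_, h, rfl⟩
  · exact (h5.image _).mono Set.subset_union_left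
  · rintro a (⟨s, hs, rfl⟩ | ha) _ ⟨t, ht, rfl⟩ hab
    · exact h7 s hs t ht ((hH s t).2 ⟨hab, fun hB => hTB t ht hB.2⟩)
    · exact hno a ha t.val (hTB t ht) hab

/-- A cut of `H` extends to a cut of `G` with the same cut set and the same trace on `H`. -/
lemma exists_extend {B : Set V} {c : V} {H : SimpleGraph ↥((B \ {c})ᶜ : Set V)}
    (hH : ∀ x y, H.Adj x y ↔ (G.Adj x.val y.val ∧ ¬ (x.val ∈ B ∧ y.val ∈ B)))
    (hno : ∀ x ∈ B \ {c}, ∀ y ∉ B, ¬ G.Adj x y)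
    {C' S' T' : Set ↥((B \ {c})ᶜ : Set V)} (h : IsVertexCut H C' S' T') :
    ∃ S T : Set V, IsVertexCut G (Subtype.val '' C') S T ∧
      Subtype.val ⁻¹' S = S' ∧ Subtype.val ⁻¹' T = T' := by
  have hpre : ∀ X : Set ↥((B \ {c})ᶜ : Set V),
      (Subtype.val ⁻¹' (Subtype.val '' X) : Set ↥((B \ {c})ᶜ : Set V)) = X :=
    fun X => Set.preimage_image_eq X Subtype.val_injective
  have hpre' : ∀ X : Set ↥((B \ {c})ᶜ : Set V),
      (Subtype.val ⁻¹' (Subtype.val '' X ∪ B \ {c}) : Set ↥((B \ {c})ᶜ : Set V)) = X := by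
    intro X
    rw [Set.preimage_union, hpre, Set.union_eq_left]
    exact fun x hx => absurd hx x.2
  by_cases hcT : ∀ t ∈ T', t.val ≠ c
  · exact ⟨_, _, extend_aux hH hno h hcT, hpre' S', hpre T'⟩
  · have hcS : ∀ s ∈ S', s.val ≠ c := by
      intro s hs hsc
      refine hcT fun t ht htc => ?_
      have : s = t := Subtype.ext (hsc.trans htc.symm)
      exact Set.disjoint_left.1 h.2.2.1 hs (this ▸ ht)
    exact ⟨_, _, (extend_aux hH hno h.swap hcS).swap, hpre S', hpre' T'⟩

/-- A cut of `G` separating `A` restricts to `H`; its sides stay nonempty because `H` contains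
`A`. -/
lemma restrict_cut {B : Set V} {c : V} {H : SimpleGraph ↥((B \ {c})ᶜ : Set V)}
    (hH : ∀ x y, H.Adj x y ↔ (G.Adj x.val y.val ∧ ¬ (x.val ∈ B ∧ y.val ∈ B)))
    {A C S T : Set V} (hA : ∀ x ∈ B, x ∉ A) (h : IsVertexCut G C S T) (hsep : SeparatesV S T A) :
    IsVertexCut H (Subtype.val ⁻¹' C) (Subtype.val ⁻¹' S) (Subtype.val ⁻¹' T) := by
  obtain ⟨h1, h2, h3, h4, -, -, h7⟩ := h
  obtain ⟨⟨s, hsA, hs⟩, ⟨t, htA, ht⟩⟩ := hsep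
  refine ⟨h1.preimage _, h2.preimage _, h3.preimage _, ?_,
    ⟨⟨s, fun hsB => hA s hsB.1 hsA⟩, hs⟩, ⟨⟨t, fun htB => hA t htB.1 htA⟩, ht⟩,
    fun a ha b hb hab => h7 _ ha _ hb ((hH a b).1 hab).1⟩
  rw [← Set.preimage_union, ← Set.preimage_union, h4, Set.preimage_univ]

end Cuts


theorem stmt14 {V : Type*} [Fintype V] (G : SimpleGraph V)
    (hconn : G.Connected) (AG : Set V)
    (B : Set V) (hB : IsBlock G B)
    (hBA : ∀ x ∈ B, x ∉ AG)
    (c : V) (hc : c ∈ B) (hccut : IsCutVertex G c)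
    (honly : ∀ x ∈ B, IsCutVertex G x → x = c)
    (H : SimpleGraph ↥((B \ {c})ᶜ : Set V))
    (hH : ∀ x y : ↥((B \ {c})ᶜ : Set V), H.Adj x y ↔
      (G.Adj x.val y.val ∧ ¬ (x.val ∈ B ∧ y.val ∈ B)))
    (f : V → ↥((B \ {c})ᶜ : Set V)) (hf : ∀ x ∈ AG, (f x).val = x) :
    ActiveCutEquivVertex G H AG (Subtype.val ⁻¹' AG) f 3 := by
  have hno : ∀ x ∈ B \ {c}, ∀ y ∉ B, ¬ G.Adj x y := fun x hx y hy =>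
    not_adj_of_not_cutVertex hB hc hx.1 hx.2 (fun h => hx.2 (honly x hx.1 h)) hy
  have hAmem : ∀ x ∈ AG, x ∈ ((B \ {c})ᶜ : Set V) := fun x hx hxB => hBA x hxB.1 hx
  have himg : ∀ S : Set V, f '' (AG ∩ S) = Subtype.val ⁻¹' AG ∩ Subtype.val ⁻¹' S := by
    intro S
    ext y
    constructor
    · rintro ⟨x, ⟨hxA, hxS⟩, rfl⟩
      exact ⟨by simpa [hf x hxA] using hxA, by simpa [hf x hxA] using hxS⟩
    · rintro ⟨hyA, hyS⟩
      exact ⟨y.val, ⟨hyA, hyS⟩, Subtype.ext (hf _ hyA)⟩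
  -- Two sets with the same active trace in `H` have the same active trace in `G`.
  have htrace : ∀ S S₁ : Set V,
      (Subtype.val ⁻¹' AG ∩ Subtype.val ⁻¹' S₁ : Set ↥((B \ {c})ᶜ : Set V)) =
        Subtype.val ⁻¹' AG ∩ Subtype.val ⁻¹' S → AG ∩ S₁ = AG ∩ S := by
    intro S S₁ h
    ext x
    constructor
    · rintro ⟨hxA, hxS⟩
      exact ((Set.ext_iff.1 h ⟨x, hAmem x hxA⟩).1 ⟨hxA, hxS⟩)
    · rintro ⟨hxA, hxS⟩
      exact ((Set.ext_iff.1 h ⟨x, hAmem x hxA⟩).2 ⟨hxA, hxS⟩)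
  -- By extension, a minimal cut of `G` is at most as large as any cut of `H` inducing the same
  -- partition of the active vertices.
  have hle : ∀ C S T : Set V, IsMinSepVertexCut G AG C S T →
      ∀ C' S' T' : Set ↥((B \ {c})ᶜ : Set V), IsVertexCut H C' S' T' →
      Subtype.val ⁻¹' AG ∩ S' = Subtype.val ⁻¹' AG ∩ Subtype.val ⁻¹' S →
      Subtype.val ⁻¹' AG ∩ T' = Subtype.val ⁻¹' AG ∩ Subtype.val ⁻¹' T →
      C.ncard ≤ C'.ncard := by
    intro C S T hmin C' S' T' hcut hS hT
    obtain ⟨S₁, T₁, hcut₁, rfl, rfl⟩ := exists_extend hH hno hcut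
    have := hmin.2.2 _ S₁ T₁ hcut₁ (htrace S S₁ hS) (htrace T T₁ hT)
    rwa [Set.ncard_image_of_injective _ Subtype.val_injective] at this
  refine ⟨fun x hx => ?_, fun y hy => ⟨y.val, hy, Subtype.ext (hf _ hy)⟩, ?_, ?_⟩
  · simpa [hf x hx] using hx
  · intro C S T hmin _
    have hcutH := restrict_cut hH hBA hmin.1 hmin.2.1
    have hcard : (Subtype.val ⁻¹' C : Set ↥((B \ {c})ᶜ : Set V)).ncard = C.ncard := by
      refine le_antisymm ?_ (hle C S T hmin _ _ _ hcutH rfl rfl)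
      rw [← Set.ncard_image_of_injective _ Subtype.val_injective]
      exact Set.ncard_le_ncard (Set.image_preimage_subset _ _) (Set.toFinite C)
    refine ⟨_, _, _, ⟨hcutH, ?_, ?_⟩, hcard, himg S, himg T⟩
    · obtain ⟨⟨s, hsA, hs⟩, ⟨t, htA, ht⟩⟩ := hmin.2.1
      exact ⟨⟨⟨s, hAmem s hsA⟩, hsA, hs⟩, ⟨⟨t, hAmem t htA⟩, htA, ht⟩⟩
    · intro C' S' T' hcut' hS hT
      rw [hcard]
      exact hle C S T hmin C' S' T' hcut' hS hT
  · intro C S T hmin hl C' S' T' hmin' hS hT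
    rw [himg] at hS hT
    exact hl.trans (hle C S T hmin C' S' T' hmin'.1 hS.symm hT.symm)
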